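/- Let P be a locally finite poset, Q a subset of P, and R = P \ Q. For all x < z in P, the Möbius function of P satisfies μ_P(x,z) = Σ_{y ∈ [x,z)_Q} μ_P(x,y) · μ_R(y,z), where [x,z)_Q denotes the subposet {x} ∪ ([x,z] ∩ Q) of the interval [x,z] (excluding z unless it is contrived in), and μ_R(y,z) is the Möbius function of the subposet {y,z} ∪ ([y,z] ∩ R). -/

import Mathlib

attribute [local instance] Classical.propDecidable

/-!
Let `M (y, z)` be the Möbius function of `{y, z} ∪ ([y, z] ∩ R)` and put `N = M - 1` in the
incidence algebra of `P`. Splitting `N` into its rows `N_Q`, `N_R` indexed by `Q` and by `R`, the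
recursion for the Möbius functions of all these subposets becomes the single identity
`N_Q + ζ * N_R = 1 - ζ`. Multiplying by `μ` on the left gives `μ - 1 = N_R + μ * N_Q`, whose value
at `(x, z)` is the factorization: the term `N_R (x, z)` is the summand `y = x` when `x ∉ Q`.
-/

open Finset IncidenceAlgebra

theorem mu_orderEmbedding_apply {𝕜 α β : Type*} [AddCommGroup 𝕜] [One 𝕜] [Preorder α]
    [LocallyFiniteOrder α] [DecidableEq α] [Preorder β] [LocallyFiniteOrder β] [DecidableEq β]
    (f : α ↪o β) (a b : α) (hf : Set.Icc (f a) (f b) ⊆ Set.range f) :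
    mu 𝕜 (f a) (f b) = mu 𝕜 a b := by
  obtain rfl | hab := eq_or_ne a b
  · rw [mu_self, mu_self]
  have Ico_map : Ico (f a) (f b) = (Ico a b).map f.toEmbedding := by
    ext c
    simp only [mem_map, mem_Ico, RelEmbedding.coe_toEmbedding]
    constructor
    · rintro ⟨hac, hcb⟩
      obtain ⟨c, rfl⟩ := hf ⟨hac, hcb.le⟩
      exact ⟨c, ⟨f.le_iff_le.1 hac, f.lt_iff_lt.1 hcb⟩, rfl⟩
    · rintro ⟨c, ⟨hac, hcb⟩, rfl⟩
      exact ⟨f.le_iff_le.2 hac, f.lt_iff_lt.2 hcb⟩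
  rw [mu_eq_neg_sum_Ico_of_ne (f.injective.ne hab), mu_eq_neg_sum_Ico_of_ne hab, Ico_map, sum_map]
  refine congrArg Neg.neg (sum_congr rfl fun c hc ↦ ?_)
  have ⟨hac, hcb⟩ := mem_Ico.1 hc
  have : #(Icc a c) < #(Icc a b) :=
    card_lt_card (Icc_ssubset_Icc_right (hac.trans hcb.le) le_rfl hcb)
  exact mu_orderEmbedding_apply f a c
    ((Set.Icc_subset_Icc_right (f.le_iff_le.2 hcb.le)).trans hf)
termination_by #(Icc a b)

theorem sum_filter_eq_or {ι M : Type*} [AddCommMonoid M] {s : Finset ι} {a : ι} (ha : a ∈ s)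
    (p : ι → Prop) (f : ι → M) :
    ∑ i ∈ s with i = a ∨ p i, f i = (if p a then 0 else f a) + ∑ i ∈ s with p i, f i := by
  split_ifs with hpa
  · have : ∀ i, i = a ∨ p i ↔ p i := fun i ↦ or_iff_right_of_imp (by rintro rfl; exact hpa)
    simp only [this, zero_add]
  · rw [filter_or, filter_eq' s a, if_pos ha, ← insert_eq, sum_insert (by simp [hpa])]

/-- The product of the diagonal element given by the indicator function of `S` with `f`: the rows
`f a` with `a ∈ S` are kept, and the others are replaced by zero. -/
noncomputable def restrictRows {𝕜 α : Type*} [Zero 𝕜] [LE α] (S : Set α)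
    (f : IncidenceAlgebra 𝕜 α) : IncidenceAlgebra 𝕜 α where
  toFun a b := if a ∈ S then f a b else 0
  eq_zero_of_not_le' a b h := by simp only [apply_eq_zero_of_not_le h, ite_self]

theorem restrictRows_apply {𝕜 α : Type*} [Zero 𝕜] [LE α] (S : Set α) (f : IncidenceAlgebra 𝕜 α)
    (a b : α) : restrictRows S f a b = if a ∈ S then f a b else 0 :=
  rfl

theorem restrictRows_compl_add_mul_restrictRows_apply {𝕜 α : Type*} [NonAssocSemiring 𝕜]
    [Preorder α] [LocallyFiniteOrder α] (S : Set α) (f g : IncidenceAlgebra 𝕜 α) {a b : α}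
    (hfa : f a a = 1) (hab : a ≤ b) :
    (restrictRows Sᶜ g + f * restrictRows S g) a b =
      ∑ c ∈ Icc a b with c = a ∨ c ∈ S, f a c * g c b := by
  rw [sum_filter_eq_or (left_mem_Icc.2 hab) (· ∈ S) (fun c ↦ f a c * g c b), sum_filter]
  simp only [IncidenceAlgebra.add_apply, mul_apply, restrictRows_apply, Set.mem_compl_iff, ite_not,
    mul_ite, mul_zero, hfa, one_mul]

section Subposet

variable {𝕜 P : Type*} [PartialOrder P] {x y z w : P}

/-- The underlying set `{y, z} ∪ ([y, z] ∩ S)` of the subposet `[y, z]_S`. -/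
def subposetIcc (S : Set P) (y z : P) : Set P :=
  {w | w = y ∨ w = z ∨ (y ≤ w ∧ w ≤ z ∧ w ∈ S)}

theorem left_mem_subposetIcc (S : Set P) (y z : P) : y ∈ subposetIcc S y z :=
  Or.inl rfl

theorem right_mem_subposetIcc (S : Set P) (y z : P) : z ∈ subposetIcc S y z :=
  Or.inr (Or.inl rfl)

theorem mem_subposetIcc_iff {S : Set P} (hyw : y ≤ w) (hwz : w ≤ z) :
    w ∈ subposetIcc S y z ↔ w = y ∨ w = z ∨ w ∈ S := by
  simp only [subposetIcc, Set.mem_ofPred_eq, hyw, hwz, true_and]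

theorem subposetIcc_subset_Icc (S : Set P) (hyz : y ≤ z) : subposetIcc S y z ⊆ Set.Icc y z := by
  rintro w (rfl | rfl | ⟨hyw, hwz, -⟩)
  exacts [⟨le_rfl, hyz⟩, ⟨hyz, le_rfl⟩, ⟨hyw, hwz⟩]

theorem subposetIcc_inter_Ici {S : Set P} (hyz : y ≤ z) (hw : w ∈ subposetIcc S y z) :
    subposetIcc S y z ∩ Set.Ici w = subposetIcc S w z := by
  obtain ⟨hyw, hwz⟩ := subposetIcc_subset_Icc S hyz hw
  ext v
  constructor
  · rintro ⟨rfl | rfl | ⟨-, hvz, hv⟩, hwv⟩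
    · exact Or.inl (hyw.antisymm hwv)
    · exact right_mem_subposetIcc S w v
    · exact Or.inr (Or.inr ⟨hwv, hvz, hv⟩)
  · rintro (rfl | rfl | ⟨hwv, hvz, hv⟩)
    · exact ⟨hw, Set.self_mem_Ici⟩
    · exact ⟨right_mem_subposetIcc S y v, hwz⟩
    · exact ⟨Or.inr (Or.inr ⟨hyw.trans hwv, hvz, hv⟩), hwv⟩

variable [LocallyFiniteOrder P]

variable (𝕜) in
/-- The paper's `μ_S`: its value at `(y, z)` is the Möbius function of the subposet `[y, z]_S`,
which varies with `(y, z)`. -/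
noncomputable def subposetMu [AddCommGroup 𝕜] [One 𝕜] (S : Set P) : IncidenceAlgebra 𝕜 P where
  toFun y z := mu 𝕜 (⟨y, left_mem_subposetIcc S y z⟩ : subposetIcc S y z)
    ⟨z, right_mem_subposetIcc S y z⟩
  eq_zero_of_not_le' _ _ h := apply_eq_zero_of_not_le (by exact h) (mu 𝕜)

theorem subposetMu_self [AddCommGroup 𝕜] [One 𝕜] (S : Set P) (z : P) : subposetMu 𝕜 S z z = 1 :=
  mu_self (𝕜 := 𝕜) (⟨z, left_mem_subposetIcc S z z⟩ : subposetIcc S z z)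

-- The instances are unified rather than synthesized: they depend on how membership in `[y, z]_S`
-- is decided.
theorem mu_subposetIcc_eq_subposetMu [AddCommGroup 𝕜] [One 𝕜] {S : Set P}
    {_ : LocallyFiniteOrder (subposetIcc S y z)} {_ : DecidableEq (subposetIcc S y z)} (hyz : y ≤ z)
    (hw : w ∈ subposetIcc S y z) :
    mu 𝕜 (⟨w, hw⟩ : subposetIcc S y z) ⟨z, right_mem_subposetIcc S y z⟩ = subposetMu 𝕜 S w z := by
  have hsub := subposetIcc_inter_Ici hyz hw
  let incl : subposetIcc S w z ↪o subposetIcc S y z :=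
    Subtype.orderEmbedding fun _ hv ↦ (hsub.ge hv).1
  exact mu_orderEmbedding_apply (𝕜 := 𝕜) incl ⟨w, left_mem_subposetIcc S w z⟩
    ⟨z, right_mem_subposetIcc S w z⟩ fun v hv ↦ ⟨⟨v, hsub.le ⟨v.2, hv.1⟩⟩, rfl⟩

variable [Ring 𝕜]

theorem sum_subposetMu_left (S : Set P) (hyz : y ≤ z) :
    ∑ w ∈ Icc y z with w ∈ subposetIcc S y z, subposetMu 𝕜 S w z = if y = z then 1 else 0 := by
  let bot : subposetIcc S y z := ⟨y, left_mem_subposetIcc S y z⟩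
  let top : subposetIcc S y z := ⟨z, right_mem_subposetIcc S y z⟩
  calc
    _ = ∑ w ∈ Icc bot top, subposetMu 𝕜 S (w : P) z := by
      rw [subtype_Icc_eq, ← subtype_map, sum_map]; rfl
    _ = ∑ w ∈ Icc bot top, mu 𝕜 w top :=
      sum_congr rfl fun w _ ↦ (mu_subposetIcc_eq_subposetMu hyz w.2).symm
    _ = if y = z then 1 else 0 := by
      simp only [sum_Icc_mu_left, bot, top, Subtype.mk.injEq]

theorem restrictRows_add_zeta_mul_restrictRows (S : Set P) :
    restrictRows Sᶜ (subposetMu 𝕜 S - 1) + zeta 𝕜 * restrictRows S (subposetMu 𝕜 S - 1) =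
      1 - zeta 𝕜 := by
  ext y z hyz
  set N := subposetMu 𝕜 S - 1 with hN
  have hNz : N z z = 0 := by simp [hN, subposetMu_self]
  calc
    _ = ∑ w ∈ Icc y z with w = y ∨ w ∈ S, zeta 𝕜 y w * N w z :=
      restrictRows_compl_add_mul_restrictRows_apply S (zeta 𝕜) N (zeta_of_le le_rfl) hyz
    _ = ∑ w ∈ Icc y z with w ∈ subposetIcc S y z, N w z := by
      simp only [sum_filter]
      refine sum_congr rfl fun w hw ↦ ?_
      obtain ⟨hyw, hwz⟩ := mem_Icc.1 hw
      rw [mem_subposetIcc_iff hyw hwz, zeta_of_le hyw, one_mul]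
      obtain rfl | hne := eq_or_ne w z
      · simp only [hNz, ite_self]
      · simp only [hne, false_or]
    _ = (1 - zeta 𝕜 : IncidenceAlgebra 𝕜 P) y z := by
      have hz : z ∈ {w ∈ Icc y z | w ∈ subposetIcc S y z} :=
        mem_filter.2 ⟨right_mem_Icc.2 hyz, right_mem_subposetIcc S y z⟩
      simp only [hN, IncidenceAlgebra.sub_apply, one_apply, sum_sub_distrib,
        sum_subposetMu_left S hyz, sum_ite_eq', if_pos hz, zeta_of_le hyz]

theorem mu_sub_one_eq_restrictRows_add_mul (Q : Set P) :
    mu 𝕜 - 1 = restrictRows Qᶜ (subposetMu 𝕜 Qᶜ - 1) +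
      mu 𝕜 * restrictRows Q (subposetMu 𝕜 Qᶜ - 1) := by
  have h := congrArg (mu 𝕜 * ·) (restrictRows_add_zeta_mul_restrictRows (𝕜 := 𝕜) Qᶜ)
  simp only [compl_compl, mul_add, mul_sub, ← mul_assoc, mu_mul_zeta, one_mul, mul_one] at h
  rw [← h, add_comm]

theorem mobius_complement_factorization_general (Q : Set P) (hxz : x < z) :
    mu 𝕜 x z = ∑ y ∈ Icc x z with (y = x ∨ y ∈ Q) ∧ y ≠ z, mu 𝕜 x y * subposetMu 𝕜 Qᶜ y z := by
  set N := subposetMu 𝕜 Qᶜ - 1 with hN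
  have hNz : N z z = 0 := by simp [hN, subposetMu_self]
  have hN_of_ne {y : P} (hy : y ≠ z) : N y z = subposetMu 𝕜 Qᶜ y z := by simp [hN, hy]
  calc
    mu 𝕜 x z = (mu 𝕜 - 1 : IncidenceAlgebra 𝕜 P) x z := by simp [hxz.ne]
    _ = ∑ y ∈ Icc x z with y = x ∨ y ∈ Q, mu 𝕜 x y * N y z := by
      rw [mu_sub_one_eq_restrictRows_add_mul Q,
        restrictRows_compl_add_mul_restrictRows_apply Q (mu 𝕜) _ (mu_self x) hxz.le]
    _ = ∑ y ∈ Icc x z with (y = x ∨ y ∈ Q) ∧ y ≠ z, mu 𝕜 x y * N y z := by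
      rw [← filter_filter]
      refine (sum_filter_of_ne fun y _ hy ↦ ?_).symm
      rintro rfl
      exact hy (by rw [hNz, mul_zero])
    _ = _ := sum_congr rfl fun y hy ↦ by rw [hN_of_ne (mem_filter.1 hy).2.2]

end Subposet

/-- For a locally finite poset `P`, a subset `Q ⊆ P` with complement `R = P \ Q`,
and `x < z` in `P`, we have `μ_P(x,z) = Σ_{y ∈ [x,z)_Q} μ_P(x,y) · μ_R(y,z)`, where
`[x,z)_Q = ({x} ∪ ([x,z] ∩ Q)) \ {z}` and `μ_R(y,z)` is the Möbius function of the
subposet `{y, z} ∪ ([y,z] ∩ R)`. -/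
theorem mobius_complement_factorization
    {P : Type*} [PartialOrder P] [LocallyFiniteOrder P]
    (Q : Set P) (x z : P) (hxz : x < z) :
    IncidenceAlgebra.mu ℤ x z =
      ∑ y ∈ (Finset.Icc x z).filter (fun y => (y = x ∨ y ∈ Q) ∧ y ≠ z),
        IncidenceAlgebra.mu ℤ x y *
          IncidenceAlgebra.mu ℤ
            (α := {w : P // w = y ∨ w = z ∨ (y ≤ w ∧ w ≤ z ∧ w ∉ Q)})
            ⟨y, Or.inl rfl⟩ ⟨z, Or.inr (Or.inl rfl)⟩ := by
  rw [mobius_complement_factorization_general Q hxz]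
  refine sum_congr rfl fun y hy ↦ congrArg (mu ℤ x y * ·) ?_
  have hyz : y ≤ z := (mem_Icc.1 (mem_filter.1 hy).1).2
  exact (mu_subposetIcc_eq_subposetMu hyz (left_mem_subposetIcc Qᶜ y z)).symm
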